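/- Let L be a residuated lattice. The map φ assigning to a ∈ L the family (a_P)_{P ∈ Spec(L)} ∈ ∏_{P ∈ Spec(L)} L/O(P) is an injective residuated lattice morphism: for all a, b ∈ L and all P ∈ Spec(L), (a ⊗ b)_P = a_P ⊗ b_P, (a ∧ b)_P = a_P ∧ b_P, (a ∨ b)_P = a_P ∨ b_P, (a → b)_P = a_P → b_P, 0_P and 1_P are the bottom and top of L/O(P); and if a_P = b_P for all P ∈ Spec(L) then a = b. -/

import Mathlib

/-- A residuated lattice: a bounded lattice with a commutative monoid
operation `mul` whose identity is the top element, and a residuum `himp`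
satisfying `mul x y ≤ z ↔ x ≤ himp y z`. Here `⊤` plays the role of `1`
and `⊥` the role of `0`. -/
class ResiduatedLattice (L : Type*) extends Lattice L, BoundedOrder L where
  mul : L → L → L
  himp : L → L → L
  mul_comm : ∀ x y : L, mul x y = mul y x
  mul_assoc : ∀ x y z : L, mul (mul x y) z = mul x (mul y z)
  mul_top : ∀ x : L, mul x ⊤ = x
  residuation : ∀ x y z : L, mul x y ≤ z ↔ x ≤ himp y z

namespace ResiduatedLattice

variable {L : Type*} [ResiduatedLattice L]

/-- A filter of a residuated lattice: a nonempty, upward closed subset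
closed under `mul`. -/
def IsFilter (F : Set L) : Prop :=
  F.Nonempty ∧ (∀ x y : L, x ∈ F → x ≤ y → y ∈ F) ∧
    ∀ x y : L, x ∈ F → y ∈ F → mul x y ∈ F

/-- A prime filter: a proper filter such that `x ⊔ y ∈ P` implies
`x ∈ P` or `y ∈ P`. -/
def IsPrimeFilter (P : Set L) : Prop :=
  IsFilter P ∧ P ≠ Set.univ ∧ ∀ x y : L, x ⊔ y ∈ P → x ∈ P ∨ y ∈ P

/-- `filterGen X` is the smallest filter containing `X`. -/
def filterGen (X : Set L) : Set L := ⋂₀ {F : Set L | IsFilter F ∧ X ⊆ F}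

/-- The prime spectrum: the set of all prime filters. -/
def Spectrum (L : Type*) [ResiduatedLattice L] := {P : Set L // IsPrimeFilter P}

/-- `D X = {P ∈ Spec L | X ⊄ P}`. -/
def D (X : Set L) : Set (Spectrum L) := {P : Spectrum L | ¬ X ⊆ P.1}

/-- `O P = {x | a ⊔ x = 1 for some a ∉ P}`. -/
def O (P : Set L) : Set L := {x : L | ∃ a ∉ P, a ⊔ x = ⊤}

/-- The congruence relation associated to a filter `F`:
`x ≡_F y` iff `(x → y) ⊗ (y → x) ∈ F`. -/
def rel (F : Set L) (x y : L) : Prop := mul (himp x y) (himp y x) ∈ F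

end ResiduatedLattice

namespace ResiduatedLattice

instance instAssocMul (L : Type*) [ResiduatedLattice L] :
    Std.Associative (mul : L → L → L) := ⟨mul_assoc⟩
instance instCommMul (L : Type*) [ResiduatedLattice L] :
    Std.Commutative (mul : L → L → L) := ⟨mul_comm⟩

section helpers
variable {L : Type*} [ResiduatedLattice L]

theorem mul_le_mul_right_aux {x y : L} (z : L) (h : x ≤ y) : mul x z ≤ mul y z :=
  (residuation _ _ _).2 (h.trans ((residuation _ _ _).1 le_rfl))

theorem mul_le_mul_left_aux {x y : L} (z : L) (h : x ≤ y) : mul z x ≤ mul z y := by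
  rw [mul_comm z x, mul_comm z y]; exact mul_le_mul_right_aux z h

theorem mul_le_left_aux (x y : L) : mul x y ≤ x := by
  have := mul_le_mul_left_aux x (le_top : y ≤ ⊤)
  rwa [mul_top] at this

theorem mul_le_right_aux (x y : L) : mul x y ≤ y := by
  rw [mul_comm]; exact mul_le_left_aux y x

theorem himp_mul_le_aux (x y : L) : mul (himp x y) x ≤ y := (residuation _ _ _).2 le_rfl

theorem sup_mul_le_aux {x y z w : L} (h1 : mul x z ≤ w) (h2 : mul y z ≤ w) :
    mul (x ⊔ y) z ≤ w :=
  (residuation _ _ _).2 (sup_le ((residuation _ _ _).1 h1) ((residuation _ _ _).1 h2))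

theorem mul_sup_le_aux {x y z w : L} (h1 : mul z x ≤ w) (h2 : mul z y ≤ w) :
    mul z (x ⊔ y) ≤ w := by
  rw [mul_comm] at h1 h2 ⊢; exact sup_mul_le_aux h1 h2

theorem key_aux (c x y : L) : mul (c ⊔ x) (c ⊔ y) ≤ c ⊔ mul x y :=
  sup_mul_le_aux ((mul_le_left_aux _ _).trans le_sup_left)
    (mul_sup_le_aux ((mul_le_right_aux _ _).trans le_sup_left) le_sup_right)

theorem top_mem_aux {F : Set L} (hF : IsFilter F) : (⊤ : L) ∈ F := by
  obtain ⟨⟨x, hx⟩, h, _⟩ := hF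
  exact h x ⊤ hx le_top

/-- The filter of all `z` with `c ⊔ z ∈ F`. -/
theorem colon_filter {F : Set L} (hF : IsFilter F) (c : L) : IsFilter {z : L | c ⊔ z ∈ F} := by
  refine ⟨⟨⊤, ?_⟩, ?_, ?_⟩
  · simpa using top_mem_aux hF
  · intro x y hx hxy
    exact hF.2.1 _ _ hx (sup_le_sup_left hxy c)
  · intro x y hx hy
    exact hF.2.1 _ _ (hF.2.2 _ _ hx hy) (key_aux c x y)

theorem singleton_top_filter : IsFilter ({⊤} : Set L) := by
  refine ⟨⟨⊤, rfl⟩, ?_, ?_⟩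
  · rintro x y rfl h
    exact top_le_iff.1 h
  · rintro x y rfl rfl
    exact mul_top _

theorem O_filter {P : Set L} (hP : IsPrimeFilter P) : IsFilter (O P) := by
  obtain ⟨hF, hne, hpr⟩ := hP
  obtain ⟨a, ha⟩ := (Set.ne_univ_iff_exists_notMem P).1 hne
  refine ⟨⟨⊤, a, ha, by simp⟩, ?_, ?_⟩
  · rintro x y ⟨a, ha, h⟩ hxy
    exact ⟨a, ha, top_le_iff.1 (h ▸ sup_le_sup_left hxy a)⟩
  · rintro x y ⟨a, ha, hax⟩ ⟨b, hb, hby⟩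
    refine ⟨a ⊔ b, fun h => (hpr _ _ h).elim ha hb, ?_⟩
    refine (colon_filter (singleton_top_filter (L := L)) (a ⊔ b)).2.2 x y ?_ ?_
    · exact top_le_iff.1 (hax ▸ sup_le_sup_right le_sup_left x)
    · exact top_le_iff.1 (hby ▸ sup_le_sup_right le_sup_right y)

theorem rel_iff_aux {F : Set L} (hF : IsFilter F) (x y : L) :
    rel F x y ↔ ∃ f ∈ F, mul f x ≤ y ∧ mul f y ≤ x := by
  constructor
  · intro h
    exact ⟨_, h, (residuation _ _ _).2 (mul_le_left_aux _ _),
      (residuation _ _ _).2 (mul_le_right_aux _ _)⟩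
  · rintro ⟨f, hf, h1, h2⟩
    refine hF.2.1 _ _ (hF.2.2 f f hf hf) ?_
    exact (mul_le_mul_right_aux _ ((residuation _ _ _).1 h1)).trans
      (mul_le_mul_left_aux _ ((residuation _ _ _).1 h2))

theorem rel_equiv {F : Set L} (hF : IsFilter F) : Equivalence (rel F) := by
  refine ⟨fun x => ?_, fun {x y} h => ?_, fun {x y z} hxy hyz => ?_⟩
  · exact (rel_iff_aux hF _ _).2 ⟨⊤, top_mem_aux hF, mul_le_right_aux _ _, mul_le_right_aux _ _⟩
  · obtain ⟨f, hf, h1, h2⟩ := (rel_iff_aux hF _ _).1 h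
    exact (rel_iff_aux hF _ _).2 ⟨f, hf, h2, h1⟩
  · obtain ⟨f, hf, h1, h2⟩ := (rel_iff_aux hF _ _).1 hxy
    obtain ⟨g, hg, h3, h4⟩ := (rel_iff_aux hF _ _).1 hyz
    refine (rel_iff_aux hF _ _).2 ⟨mul g f, hF.2.2 _ _ hg hf, ?_, ?_⟩
    · rw [mul_assoc]
      exact (mul_le_mul_left_aux g h1).trans h3
    · rw [mul_comm g f, mul_assoc]
      exact (mul_le_mul_left_aux f h4).trans h2

/-- one-sided transfer to a congruence property. -/
theorem rel_map {F : Set L} (hF : IsFilter F) (u : L → L)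
    (hu : ∀ f x y : L, mul f x ≤ y → mul f y ≤ x → mul f (u x) ≤ u y) {x y : L}
    (h : rel F x y) : rel F (u x) (u y) := by
  obtain ⟨f, hf, h1, h2⟩ := (rel_iff_aux hF _ _).1 h
  exact (rel_iff_aux hF _ _).2 ⟨f, hf, hu f x y h1 h2, hu f y x h2 h1⟩

theorem rel_inf {F : Set L} (hF : IsFilter F) (a : L) {x y : L} (h : rel F x y) :
    rel F (a ⊓ x) (a ⊓ y) :=
  rel_map hF (fun x => a ⊓ x) (fun f _ _ h1 _ => le_inf
    ((mul_le_right_aux _ _).trans inf_le_left)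
    ((mul_le_mul_left_aux f inf_le_right).trans h1)) h

theorem rel_sup {F : Set L} (hF : IsFilter F) (a : L) {x y : L} (h : rel F x y) :
    rel F (a ⊔ x) (a ⊔ y) :=
  rel_map hF (fun x => a ⊔ x) (fun _ _ _ h1 _ => mul_sup_le_aux
    ((mul_le_right_aux _ _).trans le_sup_left) (h1.trans le_sup_right)) h

theorem rel_mul {F : Set L} (hF : IsFilter F) (a : L) {x y : L} (h : rel F x y) :
    rel F (mul a x) (mul a y) :=
  rel_map hF (fun x => mul a x) (fun f x y h1 _ => by
    have e : mul f (mul a x) = mul a (mul f x) := by ac_rfl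
    exact e.le.trans (mul_le_mul_left_aux a h1)) h

theorem rel_himp_right {F : Set L} (hF : IsFilter F) (a : L) {x y : L} (h : rel F x y) :
    rel F (himp a x) (himp a y) :=
  rel_map hF (fun x => himp a x) (fun f x y h1 _ => by
    refine (residuation _ _ _).1 ?_
    rw [mul_assoc]
    exact (mul_le_mul_left_aux f (himp_mul_le_aux a x)).trans h1) h

theorem rel_himp_left {F : Set L} (hF : IsFilter F) (a : L) {x y : L} (h : rel F x y) :
    rel F (himp x a) (himp y a) :=
  rel_map hF (fun x => himp x a) (fun f x y _ h2 => by
    refine (residuation _ _ _).1 ?_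
    have e : mul (mul f (himp x a)) y = mul (himp x a) (mul f y) := by ac_rfl
    exact e.le.trans ((mul_le_mul_left_aux _ h2).trans (himp_mul_le_aux x a))) h

theorem exists_prime {F : Set L} (hF : IsFilter F) (hb : (⊥ : L) ∉ F) :
    ∃ P : Set L, IsPrimeFilter P ∧ F ⊆ P := by
  obtain ⟨P, hFP, hmax⟩ := zorn_subset_nonempty {G : Set L | IsFilter G ∧ (⊥ : L) ∉ G}
    (by
      intro c hc hchain hne
      obtain ⟨G0, hG0⟩ := hne
      refine ⟨⋃₀ c, ⟨⟨⟨⊤, G0, hG0, top_mem_aux (hc hG0).1⟩, ?_, ?_⟩, ?_⟩,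
        fun s hs => Set.subset_sUnion_of_mem hs⟩
      · rintro x y ⟨G, hG, hx⟩ hxy
        exact ⟨G, hG, (hc hG).1.2.1 _ _ hx hxy⟩
      · rintro x y ⟨G, hG, hx⟩ ⟨H, hH, hy⟩
        rcases hchain.total hG hH with h | h
        · exact ⟨H, hH, (hc hH).1.2.2 _ _ (h hx) hy⟩
        · exact ⟨G, hG, (hc hG).1.2.2 _ _ hx (h hy)⟩
      · rintro ⟨G, hG, hx⟩
        exact (hc hG).2 hx) F ⟨hF, hb⟩
  have hP := hmax.prop
  refine ⟨P, ⟨hP.1, fun h => hP.2 (h ▸ Set.mem_univ _), ?_⟩, hFP⟩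
  intro x y hxy
  by_contra hcon
  obtain ⟨hx, hy⟩ := not_or.1 hcon
  have hG : {z : L | y ⊔ z ∈ P} ∈ {G : Set L | IsFilter G ∧ (⊥ : L) ∉ G} :=
    ⟨colon_filter hP.1 y, by simpa using hy⟩
  have hle : P ⊆ {z : L | y ⊔ z ∈ P} := fun z hz => hP.1.2.1 _ _ hz le_sup_right
  have := hmax.le_of_ge hG hle
  apply hx
  apply this
  change y ⊔ x ∈ P
  rwa [sup_comm]

theorem eq_top_of_O {t : L} (h : ∀ P : Spectrum L, t ∈ O P.1) : t = ⊤ := by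
  by_contra ht
  obtain ⟨P, hP, hsub⟩ := exists_prime (colon_filter (singleton_top_filter (L := L)) t)
    (by simpa using ht)
  obtain ⟨a, ha, hat⟩ := h ⟨P, hP⟩
  apply ha
  apply hsub
  change t ⊔ a = ⊤
  rwa [sup_comm]

end helpers

/-- the map `a ↦ (a_P)_{P ∈ Spec L}` into the product of the
quotients `L/O(P)` is an injective residuated lattice morphism: the
operations of `L` descend to each quotient `L/O(P)` making the class map a
morphism, the classes of `0` and `1` are bottom and top of each stalk (with
respect to the induced meet), and `a_P = b_P` for all `P` forces `a = b`. -/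
theorem product_representation (L : Type*) [ResiduatedLattice L] :
    ∃ qinf qsup qmul qhimp : (P : Spectrum L) →
        Quot (rel (O P.1)) → Quot (rel (O P.1)) → Quot (rel (O P.1)),
      (∀ (P : Spectrum L) (a b : L),
        qinf P (Quot.mk _ a) (Quot.mk _ b) = Quot.mk _ (a ⊓ b) ∧
        qsup P (Quot.mk _ a) (Quot.mk _ b) = Quot.mk _ (a ⊔ b) ∧
        qmul P (Quot.mk _ a) (Quot.mk _ b) = Quot.mk _ (mul a b) ∧
        qhimp P (Quot.mk _ a) (Quot.mk _ b) = Quot.mk _ (himp a b)) ∧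
      (∀ (P : Spectrum L) (q : Quot (rel (O P.1))),
        qinf P (Quot.mk _ (⊥ : L)) q = Quot.mk _ (⊥ : L) ∧
        qinf P q (Quot.mk _ (⊤ : L)) = q) ∧
      ∀ a b : L,
        (∀ P : Spectrum L, Quot.mk (rel (O P.1)) a = Quot.mk (rel (O P.1)) b) →
        a = b := by
  have hO : ∀ P : Spectrum L, IsFilter (O P.1) := fun P => O_filter P.2
  refine ⟨fun P => Quot.map₂ (fun a b => a ⊓ b) (fun a _ _ h => rel_inf (hO P) a h)
      (fun x y a h => by
        simp only [inf_comm _ a]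
        exact rel_inf (hO P) a h),
    fun P => Quot.map₂ (fun a b => a ⊔ b) (fun a _ _ h => rel_sup (hO P) a h)
      (fun x y a h => by
        simp only [sup_comm _ a]
        exact rel_sup (hO P) a h),
    fun P => Quot.map₂ mul (fun a _ _ h => rel_mul (hO P) a h)
      (fun x y a h => by
        rw [mul_comm x a, mul_comm y a]
        exact rel_mul (hO P) a h),
    fun P => Quot.map₂ himp (fun a _ _ h => rel_himp_right (hO P) a h)
      (fun x y a h => rel_himp_left (hO P) a h),
    fun P a b => ⟨rfl, rfl, rfl, rfl⟩, ?_, ?_⟩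
  · intro P q
    induction q using Quot.ind with
    | mk a =>
      exact ⟨congrArg (Quot.mk _) (bot_inf_eq a), congrArg (Quot.mk _) (inf_top_eq a)⟩
  · intro a b h
    have ht : mul (himp a b) (himp b a) = ⊤ := eq_top_of_O fun P =>
      (rel_equiv (hO P)).eqvGen_iff.1 (Quot.eqvGen_exact (h P))
    have h1 : (⊤ : L) ≤ himp a b := ht ▸ mul_le_left_aux _ _
    have h2 : (⊤ : L) ≤ himp b a := ht ▸ mul_le_right_aux _ _
    have h1 := (residuation _ _ _).2 h1
    have h2 := (residuation _ _ _).2 h2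
    rw [mul_comm, mul_top] at h1 h2
    exact le_antisymm h1 h2

end ResiduatedLattice
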